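/- arXiv:1702.06714 — 3 statements merged into one kernel-verified Lean document; each statement's English description precedes it below -/
import Mathlib

section
/- Let U ⊆ ℝⁿ be open, let D be a torsion-free affine connection on U with smooth Christoffel symbols Γ_{ij}^k, and let μ ∈ ℝ. If h : U → ℝ is of class C² and satisfies the affine quasi-Einstein equation ∂_i∂_j h − Σ_k Γ_{ij}^k ∂_k h = μ h (ρ_s)_{ij} on U for all i,j, then h is of class C^∞ on U. -/
/-!
The equation is overdetermined: it expresses every second partial derivative of `h` through `h`,
its first partial derivatives and smooth coefficients,
`∂_i∂_j h = Σ_k Γ_{ij}^k ∂_k h + μ h (ρ_s)_{ij}`. Hence no elliptic theory is needed: if `h` is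
`C^{m+1}`, the right-hand side is `C^m`, so each `∂_j h` has `C^m` partial derivatives and is
`C^{m+1}` (`contDiffOn_succ_of_pd`), which makes `h` of class `C^{m+2}`. The hypothesis that `h` is
`C²` starts the bootstrap and makes the first partial derivatives differentiable.
-/

open scoped ContDiff

/-- Partial derivative `∂_i f` in coordinates on `ℝⁿ`. -/
noncomputable def pd {n : ℕ} (i : Fin n) (f : (Fin n → ℝ) → ℝ) : (Fin n → ℝ) → ℝ :=
  fun x => fderiv ℝ f x (Pi.single i 1)

/-- Hessian `(Hess_h)_{ij} = ∂_i∂_j h − Σ_k Γ_{ij}^k ∂_k h` of `h` w.r.t. the connection `Γ`. -/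
noncomputable def hessD {n : ℕ} (Γ : Fin n → Fin n → Fin n → (Fin n → ℝ) → ℝ)
    (h : (Fin n → ℝ) → ℝ) (i j : Fin n) : (Fin n → ℝ) → ℝ :=
  fun x => pd i (pd j h) x - ∑ k, Γ i j k x * pd k h x

/-- Ricci tensor
`ρ_{ij} = Σ_k (∂_k Γ_{ij}^k − ∂_i Γ_{kj}^k) + Σ_{k,l} (Γ_{kl}^k Γ_{ij}^l − Γ_{il}^k Γ_{kj}^l)`. -/
noncomputable def ricciD {n : ℕ} (Γ : Fin n → Fin n → Fin n → (Fin n → ℝ) → ℝ)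
    (i j : Fin n) : (Fin n → ℝ) → ℝ :=
  fun x => (∑ k, (pd k (Γ i j k) x - pd i (Γ k j k) x))
    + ∑ k, ∑ l, (Γ k l k x * Γ i j l x - Γ i l k x * Γ k j l x)

/-- Symmetrized Ricci tensor `(ρ_s)_{ij} = (ρ_{ij} + ρ_{ji})/2`. -/
noncomputable def ricciSymD {n : ℕ} (Γ : Fin n → Fin n → Fin n → (Fin n → ℝ) → ℝ)
    (i j : Fin n) : (Fin n → ℝ) → ℝ :=
  fun x => (ricciD Γ i j x + ricciD Γ j i x) / 2

/-- On an open set, partial differentiation costs one order of smoothness. -/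
lemma contDiffOn_pd {n : ℕ} {U : Set (Fin n → ℝ)} (hU : IsOpen U) {f : (Fin n → ℝ) → ℝ}
    {m p : WithTop ℕ∞} (hf : ContDiffOn ℝ p f U) (hmp : m + 1 ≤ p) (i : Fin n) :
    ContDiffOn ℝ m (pd i f) U :=
  (hf.fderiv_of_isOpen hU hmp).clm_apply contDiffOn_const

/-- A differentiable function whose partial derivatives are all `C^m` is `C^{m+1}`. -/
lemma contDiffOn_succ_of_pd {n : ℕ} {U : Set (Fin n → ℝ)} (hU : IsOpen U)
    {f : (Fin n → ℝ) → ℝ} {m : ℕ} (hf : DifferentiableOn ℝ f U)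
    (hpd : ∀ i, ContDiffOn ℝ m (pd i f) U) : ContDiffOn ℝ (m + 1) f U := by
  rw [contDiffOn_succ_iff_fderiv_of_isOpen hU]
  refine ⟨hf, by simp, ?_⟩
  have hfd : fderiv ℝ f = fun x => ∑ i, pd i f x •
      (ContinuousLinearMap.proj i : (Fin n → ℝ) →L[ℝ] ℝ) := by
    funext x
    ext v
    conv_lhs => rw [pi_eq_sum_univ' v]
    simp [pd, mul_comm]
  rw [hfd]
  exact ContDiffOn.sum fun i _ => (hpd i).smul contDiffOn_const

lemma contDiffOn_ricciSymD {n : ℕ} {U : Set (Fin n → ℝ)} (hU : IsOpen U)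
    {Γ : Fin n → Fin n → Fin n → (Fin n → ℝ) → ℝ}
    (hΓ : ∀ i j k, ContDiffOn ℝ ∞ (Γ i j k) U) (i j : Fin n) :
    ContDiffOn ℝ ∞ (ricciSymD Γ i j) U := by
  have hpd : ∀ l i j k, ContDiffOn ℝ ∞ (pd l (Γ i j k)) U := fun l i j k =>
    contDiffOn_pd hU (hΓ i j k) (by simp) l
  have hric : ∀ i j, ContDiffOn ℝ ∞ (ricciD Γ i j) U := fun i j =>
    (ContDiffOn.sum fun k _ => (hpd _ _ _ _).sub (hpd _ _ _ _)).add
      (ContDiffOn.sum fun k _ => ContDiffOn.sum fun l _ =>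
        ((hΓ _ _ _).mul (hΓ _ _ _)).sub ((hΓ _ _ _).mul (hΓ _ _ _)))
  exact ((hric i j).add (hric j i)).div_const 2

/-- a `C²` solution of the affine quasi-Einstein equation for a torsion-free
connection with smooth Christoffel symbols is smooth. -/
theorem statement0 {n : ℕ} (U : Set (Fin n → ℝ)) (hU : IsOpen U)
    (Γ : Fin n → Fin n → Fin n → (Fin n → ℝ) → ℝ)
    (hΓ : ∀ i j k, ContDiffOn ℝ ∞ (Γ i j k) U)
    (hΓsym : ∀ i j k, Γ i j k = Γ j i k)
    (μ : ℝ) (h : (Fin n → ℝ) → ℝ) (hh : ContDiffOn ℝ 2 h U)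
    (heq : ∀ x ∈ U, ∀ i j, hessD Γ h i j x = μ * h x * ricciSymD Γ i j x) :
    ContDiffOn ℝ ∞ h U := by
  have key : ∀ m : ℕ, ContDiffOn ℝ (m + 1) h U := by
    intro m
    induction m with
    | zero => exact hh.of_le (by norm_num)
    | succ m ih =>
      have hle : (m : WithTop ℕ∞) ≤ ∞ := by exact_mod_cast le_top
      have hpd : ∀ k, ContDiffOn ℝ m (pd k h) U := contDiffOn_pd hU ih le_rfl
      have hpd2 : ∀ i j, ContDiffOn ℝ m (pd i (pd j h)) U := by
        intro i j
        have hrhs : ContDiffOn ℝ m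
            (fun x => (∑ k, Γ i j k x * pd k h x) + μ * h x * ricciSymD Γ i j x) U :=
          (ContDiffOn.sum fun k _ => ((hΓ i j k).of_le hle).mul (hpd k)).add
            ((contDiffOn_const.mul (ih.of_le le_self_add)).mul
              ((contDiffOn_ricciSymD hU hΓ i j).of_le hle))
        refine hrhs.congr fun x hx => ?_
        have hx_eq := heq x hx i j
        simp only [hessD] at hx_eq
        linarith
      have hdiff : ∀ j, DifferentiableOn ℝ (pd j h) U := fun j =>
        (contDiffOn_pd (m := 1) hU hh (by norm_num) j).differentiableOn (by simp)
      have hpd1 : ∀ j, ContDiffOn ℝ (m + 1 : ℕ) (pd j h) U := fun j => by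
        exact_mod_cast contDiffOn_succ_of_pd hU (hdiff j) fun i => hpd2 i j
      exact contDiffOn_succ_of_pd hU (hh.differentiableOn (by simp)) hpd1
  exact contDiffOn_infty.2 fun m => (key m).of_le le_self_add
end

section
/- Let n ≥ 2, let U ⊆ ℝⁿ be open, let D be a torsion-free affine connection on U with smooth Christoffel symbols Γ_{ij}^k, and let p ∈ U. If for some μ ∈ ℝ there exists a connected open neighborhood V ⊆ U of p such that the space of smooth solutions on V of the affine quasi-Einstein equation ∂_i∂_j h − Σ_k Γ_{ij}^k ∂_k h = μ h (ρ_s)_{ij} has dimension exactly n + 1, then D is strongly projectively flat on some open neighborhood of p. -/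
/-! The 1-jet of a solution of the quasi-Einstein equation satisfies a linear first-order system,
so on a connected open set a solution is determined by its 1-jet at `p` (`sol_eq_zero`). As the
space of 1-jets has dimension `n + 1`, the dimension hypothesis makes every jet at `p` the jet of
a solution (`exists_sol_jet`). Choose solutions `u, h₁, …, hₙ` with `u(p) = 1`, `du(p) = 0`,
`hₐ(p) = 0`, `dhₐ(p) = dxₐ`. Near `p`, put `w = d log u` and `yₐ = hₐ / u`. Subtracting `yₐ` times
the equation of `u` from the equation of `hₐ = yₐ u` removes the Ricci term and leaves
`∂ᵢ∂ⱼ yₐ = Σₖ Gᵢⱼᵏ ∂ₖ yₐ`, where `G = Γ - w ⊗ id - id ⊗ w`. So the `dyₐ` form a `G`-parallel coframe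
near `p`, and since the curvature of `G` annihilates parallel differentials (`curvature_apply`),
`G` is flat. -/

open scoped ContDiff

/-- The set of smooth solutions on `V` of the affine quasi-Einstein equation with
eigenvalue `μ` for the connection `Γ`. -/
def solSet {n : ℕ} (V : Set (Fin n → ℝ))
    (Γ : Fin n → Fin n → Fin n → (Fin n → ℝ) → ℝ) (μ : ℝ) : Set ((Fin n → ℝ) → ℝ) :=
  {h | ContDiffOn ℝ ∞ h V ∧ ∀ x ∈ V, ∀ i j, hessD Γ h i j x = μ * h x * ricciSymD Γ i j x}

/-- `Γ` is strongly projectively flat on `W`: `Γ_{ij}^k = Γ̃_{ij}^k + ω_i δ_j^k + ω_j δ_i^k`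
for some closed smooth 1-form `ω` and some flat torsion-free connection `Γ̃` on `W`. -/
def StronglyProjFlatOn {n : ℕ} (Γ : Fin n → Fin n → Fin n → (Fin n → ℝ) → ℝ)
    (W : Set (Fin n → ℝ)) : Prop :=
  ∃ (w : Fin n → (Fin n → ℝ) → ℝ) (G : Fin n → Fin n → Fin n → (Fin n → ℝ) → ℝ),
    (∀ i, ContDiffOn ℝ ∞ (w i) W) ∧
    (∀ x ∈ W, ∀ i j, pd i (w j) x = pd j (w i) x) ∧
    (∀ i j k, ContDiffOn ℝ ∞ (G i j k) W) ∧
    (∀ i j k, G i j k = G j i k) ∧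
    (∀ x ∈ W, ∀ a b c d, pd a (G b c d) x - pd b (G a c d) x
      + ∑ l, (G a l d x * G b c l x - G b l d x * G a c l x) = 0) ∧
    (∀ x ∈ W, ∀ i j k, Γ i j k x = G i j k x
      + w i x * (if j = k then 1 else 0) + w j x * (if i = k then 1 else 0))

/-! ### Partial derivatives of smooth functions -/

lemma pd_congr {n : ℕ} {V : Set (Fin n → ℝ)} (hV : IsOpen V) {f g : (Fin n → ℝ) → ℝ}
    (h : ∀ x ∈ V, f x = g x) (i : Fin n) : ∀ x ∈ V, pd i f x = pd i g x := by
  intro x hx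
  have : f =ᶠ[nhds x] g := Filter.eventuallyEq_of_mem (hV.mem_nhds hx) h
  simp only [pd, this.fderiv_eq]

lemma diffAt {n : ℕ} {V : Set (Fin n → ℝ)} (hV : IsOpen V) {f : (Fin n → ℝ) → ℝ}
    (h : ContDiffOn ℝ ∞ f V) {x : Fin n → ℝ} (hx : x ∈ V) : DifferentiableAt ℝ f x :=
  (h.contDiffAt (hV.mem_nhds hx)).differentiableAt (by simp)

lemma contDiffOn_pd_s6 {n : ℕ} {V : Set (Fin n → ℝ)} (hV : IsOpen V) {f : (Fin n → ℝ) → ℝ}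
    (h : ContDiffOn ℝ ∞ f V) (i : Fin n) : ContDiffOn ℝ ∞ (pd i f) V :=
  (h.fderiv_of_isOpen hV (m := ∞) (by simp)).clm_apply contDiffOn_const

lemma pd_comm {n : ℕ} {V : Set (Fin n → ℝ)} (hV : IsOpen V) {f : (Fin n → ℝ) → ℝ}
    (h : ContDiffOn ℝ ∞ f V) (i j : Fin n) {x : Fin n → ℝ} (hx : x ∈ V) :
    pd i (pd j f) x = pd j (pd i f) x := by
  have hd : DifferentiableAt ℝ (fderiv ℝ f) x :=
    ((h.fderiv_of_isOpen hV (m := ∞) (by simp)).contDiffAt (hV.mem_nhds hx)).differentiableAt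
      (by simp)
  have key : ∀ a b : Fin n, pd a (pd b f) x
      = fderiv ℝ (fderiv ℝ f) x (Pi.single a 1) (Pi.single b 1) := by
    intro a b
    unfold pd
    rw [fderiv_clm_apply hd (differentiableAt_const _)]
    simp
  rw [key, key]
  refine (h.contDiffAt (hV.mem_nhds hx)).isSymmSndFDerivAt ?_ _ _
  simp only [minSmoothness_of_isRCLikeNormedField]
  exact WithTop.coe_le_coe.2 le_top

lemma pd_add {n : ℕ} {f g : (Fin n → ℝ) → ℝ} {x : Fin n → ℝ} (hf : DifferentiableAt ℝ f x)
    (hg : DifferentiableAt ℝ g x) (i : Fin n) :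
    pd i (fun y => f y + g y) x = pd i f x + pd i g x := by
  unfold pd
  rw [fderiv_fun_add hf hg]
  simp

lemma pd_mul {n : ℕ} {f g : (Fin n → ℝ) → ℝ} {x : Fin n → ℝ} (hf : DifferentiableAt ℝ f x)
    (hg : DifferentiableAt ℝ g x) (i : Fin n) :
    pd i (fun y => f y * g y) x = f x * pd i g x + g x * pd i f x := by
  unfold pd
  rw [fderiv_fun_mul hf hg]
  simp

lemma pd_const_mul {n : ℕ} {f : (Fin n → ℝ) → ℝ} {x : Fin n → ℝ} (hf : DifferentiableAt ℝ f x)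
    (c : ℝ) (i : Fin n) :
    pd i (fun y => c * f y) x = c * pd i f x := by
  unfold pd
  rw [fderiv_const_mul hf]
  simp

lemma pd_sum {n : ℕ} {ι : Type*} (s : Finset ι) {f : ι → (Fin n → ℝ) → ℝ} {x : Fin n → ℝ}
    (hf : ∀ k ∈ s, DifferentiableAt ℝ (f k) x) (i : Fin n) :
    pd i (fun y => ∑ k ∈ s, f k y) x = ∑ k ∈ s, pd i (f k) x := by
  unfold pd
  rw [fderiv_fun_sum hf]
  simp

lemma fderiv_eq_sum_pd {n : ℕ} (f : (Fin n → ℝ) → ℝ) (x v : Fin n → ℝ) :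
    fderiv ℝ f x v = ∑ i, v i * pd i f x := by
  conv_lhs => rw [pi_eq_sum_univ' v]
  rw [map_sum]
  refine Finset.sum_congr rfl fun i _ => ?_
  rw [map_smul, smul_eq_mul, pd]

lemma pd_mul_pd_mul {n : ℕ} {V : Set (Fin n → ℝ)} (hV : IsOpen V) {f g : (Fin n → ℝ) → ℝ}
    (hf : ContDiffOn ℝ ∞ f V) (hg : ContDiffOn ℝ ∞ g V) (i j : Fin n) {x : Fin n → ℝ}
    (hx : x ∈ V) :
    pd i (pd j (fun y => f y * g y)) x = f x * pd i (pd j g) x + pd j g x * pd i f x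
      + (g x * pd i (pd j f) x + pd j f x * pd i g x) := by
  rw [pd_congr hV (fun y hy => pd_mul (diffAt hV hf hy) (diffAt hV hg hy) j) i x hx]
  have df := diffAt hV hf hx
  have dg := diffAt hV hg hx
  have df' := diffAt hV (contDiffOn_pd_s6 hV hf j) hx
  have dg' := diffAt hV (contDiffOn_pd_s6 hV hg j) hx
  rw [pd_add (df.fun_mul dg') (dg.fun_mul df'), pd_mul df dg', pd_mul dg df']

/-! ### The solution space and its 1-jets -/

lemma continuousOn_ricciSymD {n : ℕ} {V : Set (Fin n → ℝ)} (hV : IsOpen V)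
    {Γ : Fin n → Fin n → Fin n → (Fin n → ℝ) → ℝ}
    (hΓ : ∀ i j k, ContDiffOn ℝ ∞ (Γ i j k) V) (i j : Fin n) :
    ContinuousOn (ricciSymD Γ i j) V := by
  have h1 : ∀ i j k, ContinuousOn (Γ i j k) V := fun i j k => (hΓ i j k).continuousOn
  have h2 : ∀ l i j k, ContinuousOn (pd l (Γ i j k)) V := fun l i j k =>
    (contDiffOn_pd_s6 hV (hΓ i j k) l).continuousOn
  have h3 : ∀ i j, ContinuousOn (ricciD Γ i j) V := by
    intro i j
    refine ContinuousOn.add (continuousOn_finsetSum _ fun k _ => (h2 _ _ _ _).sub (h2 _ _ _ _))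
      (continuousOn_finsetSum _ fun k _ => continuousOn_finsetSum _ fun l _ => ?_)
    exact ((h1 _ _ _).mul (h1 _ _ _)).sub ((h1 _ _ _).mul (h1 _ _ _))
  exact ((h3 i j).add (h3 j i)).div_const 2

lemma solSet_congr {n : ℕ} {V : Set (Fin n → ℝ)} (hV : IsOpen V)
    {Γ : Fin n → Fin n → Fin n → (Fin n → ℝ) → ℝ} {μ : ℝ} {f g : (Fin n → ℝ) → ℝ}
    (hf : f ∈ solSet V Γ μ) (h : ∀ x ∈ V, g x = f x) : g ∈ solSet V Γ μ := by
  refine ⟨hf.1.congr h, fun x hx i j => ?_⟩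
  have := hf.2 x hx i j
  unfold hessD at this ⊢
  rw [pd_congr hV (pd_congr hV h j) i x hx, h x hx, ← this]
  simp only [pd_congr hV h _ x hx]

lemma solSet_add {n : ℕ} {V : Set (Fin n → ℝ)} (hV : IsOpen V)
    {Γ : Fin n → Fin n → Fin n → (Fin n → ℝ) → ℝ} {μ : ℝ} {f g : (Fin n → ℝ) → ℝ}
    (hf : f ∈ solSet V Γ μ) (hg : g ∈ solSet V Γ μ) :
    (fun x => f x + g x) ∈ solSet V Γ μ := by
  refine ⟨hf.1.add hg.1, fun x hx i j => ?_⟩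
  have e1 := hf.2 x hx i j
  have e2 := hg.2 x hx i j
  have h1 : ∀ j, ∀ x ∈ V, pd j (fun x => f x + g x) x = pd j f x + pd j g x := fun j x hx =>
    pd_add (diffAt hV hf.1 hx) (diffAt hV hg.1 hx) j
  unfold hessD at e1 e2 ⊢
  rw [pd_congr hV (h1 j) i x hx, pd_add (diffAt hV (contDiffOn_pd_s6 hV hf.1 j) hx)
    (diffAt hV (contDiffOn_pd_s6 hV hg.1 j) hx)]
  simp only [h1 _ x hx, mul_add, Finset.sum_add_distrib]
  linarith

lemma solSet_smul {n : ℕ} {V : Set (Fin n → ℝ)} (hV : IsOpen V)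
    {Γ : Fin n → Fin n → Fin n → (Fin n → ℝ) → ℝ} {μ : ℝ} {f : (Fin n → ℝ) → ℝ}
    (hf : f ∈ solSet V Γ μ) (c : ℝ) :
    (fun x => c * f x) ∈ solSet V Γ μ := by
  refine ⟨contDiffOn_const.mul hf.1, fun x hx i j => ?_⟩
  have e1 := hf.2 x hx i j
  have h1 : ∀ j, ∀ x ∈ V, pd j (fun x => c * f x) x = c * pd j f x := fun j x hx =>
    pd_const_mul (diffAt hV hf.1 hx) c j
  unfold hessD at e1 ⊢
  rw [pd_congr hV (h1 j) i x hx, pd_const_mul (diffAt hV (contDiffOn_pd_s6 hV hf.1 j) hx)]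
  have : ∑ k, Γ i j k x * pd k (fun x => c * f x) x = c * ∑ k, Γ i j k x * pd k f x := by
    rw [Finset.mul_sum]
    exact Finset.sum_congr rfl fun k _ => by rw [h1 k x hx]; ring
  rw [this, ← mul_sub, e1]
  ring

/-- The 1-jet of `h` in coordinates: its value and all its first partial derivatives. -/
noncomputable def jet {n : ℕ} (h : (Fin n → ℝ) → ℝ) (x : Fin n → ℝ) : ℝ × (Fin n → ℝ) :=
  (h x, fun k => pd k h x)

lemma hasFDerivAt_jet {n : ℕ} {V : Set (Fin n → ℝ)} (hV : IsOpen V) {h : (Fin n → ℝ) → ℝ}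
    (hh : ContDiffOn ℝ ∞ h V) {x : Fin n → ℝ} (hx : x ∈ V) :
    HasFDerivAt (jet h) ((fderiv ℝ h x).prod
      (ContinuousLinearMap.pi fun k => fderiv ℝ (pd k h) x)) x :=
  (diffAt hV hh hx).hasFDerivAt.prodMk
    (hasFDerivAt_pi.2 fun k => (diffAt hV (contDiffOn_pd_s6 hV hh k) hx).hasFDerivAt)

/-- The quasi-Einstein equation is a linear system of first order for the 1-jet of a solution:
the derivative of the jet is bounded by the jet, with a locally bounded constant. -/
lemma norm_jet_deriv_le {n : ℕ} {V : Set (Fin n → ℝ)}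
    {Γ : Fin n → Fin n → Fin n → (Fin n → ℝ) → ℝ} {μ : ℝ} {h : (Fin n → ℝ) → ℝ}
    (hh : h ∈ solSet V Γ μ) {x : Fin n → ℝ} (hx : x ∈ V) (v : Fin n → ℝ) :
    ‖((fderiv ℝ h x).prod (ContinuousLinearMap.pi fun k => fderiv ℝ (pd k h) x)) v‖
      ≤ ((n + ∑ i, ∑ k, (∑ l, |Γ i k l x| + |μ * ricciSymD Γ i k x|)) * ‖v‖) * ‖jet h x‖ := by
  have hv : ∀ i, |v i| ≤ ‖v‖ := fun i => norm_le_pi_norm v i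
  have j0 : |h x| ≤ ‖jet h x‖ := norm_fst_le (jet h x)
  have j1 : ∀ k, |pd k h x| ≤ ‖jet h x‖ := fun k =>
    (norm_le_pi_norm (jet h x).2 k).trans (norm_snd_le (jet h x))
  have hJ := norm_nonneg (jet h x)
  have hN := norm_nonneg v
  have hA : ∀ i k, 0 ≤ ∑ l, |Γ i k l x| + |μ * ricciSymD Γ i k x| := fun i k => by positivity
  set A : Fin n → Fin n → ℝ := fun i k => ∑ l, |Γ i k l x| + |μ * ricciSymD Γ i k x| with hAdef
  have hS : 0 ≤ ∑ i, ∑ k, A i k :=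
    Finset.sum_nonneg fun i _ => Finset.sum_nonneg fun k _ => hA i k
  rw [Prod.norm_def, max_le_iff]
  constructor
  · change |fderiv ℝ h x v| ≤ _
    rw [fderiv_eq_sum_pd]
    calc |∑ i, v i * pd i h x| ≤ ∑ i, |v i * pd i h x| := Finset.abs_sum_le_sum_abs _ _
      _ ≤ ∑ _i : Fin n, ‖v‖ * ‖jet h x‖ := Finset.sum_le_sum fun i _ => by
          rw [abs_mul]; exact mul_le_mul (hv i) (j1 i) (abs_nonneg _) hN
      _ = (n * ‖v‖) * ‖jet h x‖ := by simp; ring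
      _ ≤ _ := by gcongr; linarith
  · rw [pi_norm_le_iff_of_nonneg (by positivity)]
    intro k
    change |fderiv ℝ (pd k h) x v| ≤ _
    rw [fderiv_eq_sum_pd]
    have hb : ∀ i, |pd i (pd k h) x| ≤ A i k * ‖jet h x‖ := by
      intro i
      have e := hh.2 x hx i k
      unfold hessD at e
      have e' : pd i (pd k h) x = ∑ l, Γ i k l x * pd l h x + (μ * ricciSymD Γ i k x) * h x := by
        linarith
      rw [e', hAdef, add_mul, Finset.sum_mul]
      refine (abs_add_le _ _).trans (add_le_add ((Finset.abs_sum_le_sum_abs _ _).trans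
        (Finset.sum_le_sum fun l _ => ?_)) ?_)
      · rw [abs_mul]; exact mul_le_mul_of_nonneg_left (j1 l) (abs_nonneg _)
      · rw [abs_mul]; exact mul_le_mul_of_nonneg_left j0 (abs_nonneg _)
    calc |∑ i, v i * pd i (pd k h) x| ≤ ∑ i, |v i * pd i (pd k h) x| :=
          Finset.abs_sum_le_sum_abs _ _
      _ ≤ ∑ i, ‖v‖ * (A i k * ‖jet h x‖) := Finset.sum_le_sum fun i _ => by
          rw [abs_mul]; exact mul_le_mul (hv i) (hb i) (abs_nonneg _) hN
      _ = ((∑ i, A i k) * ‖v‖) * ‖jet h x‖ := by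
          rw [Finset.sum_mul, Finset.sum_mul]
          exact Finset.sum_congr rfl fun i _ => by ring
      _ ≤ _ := by
          have : ∑ i, A i k ≤ ∑ i, ∑ k, A i k := Finset.sum_le_sum fun i _ =>
            Finset.single_le_sum (f := fun k => A i k) (fun k _ => hA i k) (Finset.mem_univ k)
          gcongr
          linarith [(Nat.cast_nonneg n : (0 : ℝ) ≤ n)]

/-- Unique continuation: on a connected open set a solution whose 1-jet vanishes at one point
is zero. The zero set of the jet is open by Grönwall's inequality along segments, and it is
relatively closed by continuity. -/
lemma sol_eq_zero {n : ℕ} {V : Set (Fin n → ℝ)} (hV : IsOpen V) (hc : IsPreconnected V)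
    {Γ : Fin n → Fin n → Fin n → (Fin n → ℝ) → ℝ}
    (hΓ : ∀ i j k, ContDiffOn ℝ ∞ (Γ i j k) V) {μ : ℝ} {h : (Fin n → ℝ) → ℝ}
    (hh : h ∈ solSet V Γ μ) {p : Fin n → ℝ} (hp : p ∈ V) (h0 : jet h p = 0) :
    ∀ x ∈ V, h x = 0 := by
  have hcont : ContinuousOn (jet h) V := fun x hx =>
    (hasFDerivAt_jet hV hh.1 hx).continuousAt.continuousWithinAt
  set c : (Fin n → ℝ) → ℝ :=
    fun x => n + ∑ i, ∑ k, (∑ l, |Γ i k l x| + |μ * ricciSymD Γ i k x|) with hcdef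
  have hcc : ContinuousOn c V := by
    refine continuousOn_const.add (continuousOn_finsetSum _ fun i _ =>
      continuousOn_finsetSum _ fun k _ => ContinuousOn.add
        (continuousOn_finsetSum _ fun l _ => (hΓ i k l).continuousOn.abs) ?_)
    exact (continuousOn_const.mul (continuousOn_ricciSymD hV hΓ i k)).abs
  have hZ : IsOpen (V ∩ jet h ⁻¹' {0}) := by
    rw [Metric.isOpen_iff]
    rintro z ⟨hzV, hz⟩
    have hev : ∀ᶠ x in nhds z, x ∈ V ∧ c x < c z + 1 :=
      (hV.eventually_mem hzV).and
        ((hcc.continuousAt (hV.mem_nhds hzV)).eventually (gt_mem_nhds (by linarith)))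
    obtain ⟨r, hr, hball⟩ := Metric.eventually_nhds_iff_ball.1 hev
    refine ⟨r, hr, fun y hy => ⟨(hball y hy).1, ?_⟩⟩
    have hseg : ∀ t ∈ Set.Icc (0 : ℝ) 1, z + t • (y - z) ∈ Metric.ball z r := fun t ht =>
      (convex_ball z r).add_smul_sub_mem (Metric.mem_ball_self hr) hy ht
    have hder : ∀ t ∈ Set.Icc (0 : ℝ) 1, HasDerivAt (fun t : ℝ => jet h (z + t • (y - z)))
        (((fderiv ℝ h (z + t • (y - z))).prod (ContinuousLinearMap.pi fun k =>
          fderiv ℝ (pd k h) (z + t • (y - z)))) (y - z)) t := by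
      intro t ht
      refine HasFDerivAt.comp_hasDerivAt (f := fun t : ℝ => z + t • (y - z)) t
        (hasFDerivAt_jet hV hh.1 (hball _ (hseg t ht)).1) ?_
      simpa using ((hasDerivAt_id t).smul_const (y - z)).const_add z
    have key := eq_zero_of_abs_deriv_le_mul_abs_self_of_eq_zero_right
      (K := (c z + 1) * ‖y - z‖)
      (fun t ht => (hder t ht).continuousAt.continuousWithinAt)
      (fun t ht => (hder t ⟨ht.1, ht.2.le⟩).hasDerivWithinAt)
      (by simpa using hz) (fun t ht => ?_) 1 (by simp)
    · simpa using key
    · have hb := hball _ (hseg t ⟨ht.1, ht.2.le⟩)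
      refine (norm_jet_deriv_le hh hb.1 _).trans ?_
      exact mul_le_mul_of_nonneg_right
        (mul_le_mul_of_nonneg_right hb.2.le (norm_nonneg _)) (norm_nonneg _)
  have hZ' : IsOpen (V ∩ jet h ⁻¹' {0}ᶜ) :=
    hcont.isOpen_inter_preimage hV isOpen_compl_singleton
  have hsub : V ⊆ V ∩ jet h ⁻¹' {0} := by
    refine IsPreconnected.subset_left_of_subset_union hZ hZ' ?_ ?_ ⟨p, hp, hp, h0⟩ hc
    · rw [Set.disjoint_left]
      rintro x ⟨_, hx⟩ ⟨_, hx'⟩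
      exact hx' hx
    · intro x hx
      by_cases hx0 : jet h x = 0
      · exact Or.inl ⟨hx, hx0⟩
      · exact Or.inr ⟨hx, hx0⟩
  intro x hx
  exact congrArg Prod.fst (hsub hx).2

/-- If the solution space has dimension `n + 1`, then every 1-jet at `p` is the jet of a
solution: evaluation of jets is injective between spaces of the same finite dimension. -/
lemma exists_sol_jet {n : ℕ} {V : Set (Fin n → ℝ)} (hV : IsOpen V) (hc : IsPreconnected V)
    {Γ : Fin n → Fin n → Fin n → (Fin n → ℝ) → ℝ}
    (hΓ : ∀ i j k, ContDiffOn ℝ ∞ (Γ i j k) V) {μ : ℝ} {p : Fin n → ℝ} (hp : p ∈ V)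
    (hdim : Module.rank ℝ ↥(Submodule.span ℝ (V.restrict '' solSet V Γ μ)) = (n : Cardinal) + 1)
    (a : ℝ × (Fin n → ℝ)) : ∃ h ∈ solSet V Γ μ, jet h p = a := by
  classical
  -- A function on `V` is extended by zero so that its partial derivatives make sense.
  let ext : (V → ℝ) → (Fin n → ℝ) → ℝ := fun f x => if hx : x ∈ V then f ⟨x, hx⟩ else 0
  have ext_add : ∀ f g, ext (f + g) = fun x => ext f x + ext g x := by
    intro f g; funext x; by_cases hx : x ∈ V <;> simp [ext, hx]
  have ext_smul : ∀ (c : ℝ) f, ext (c • f) = fun x => c * ext f x := by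
    intro c f; funext x; by_cases hx : x ∈ V <;> simp [ext, hx]
  set S := Submodule.span ℝ (V.restrict '' solSet V Γ μ) with hS
  have hsol : ∀ f : S, ext f ∈ solSet V Γ μ := by
    rintro ⟨f, hf⟩
    change ext f ∈ solSet V Γ μ
    induction hf using Submodule.span_induction with
    | mem f hf =>
      obtain ⟨h, hh, rfl⟩ := hf
      exact solSet_congr hV hh fun x hx => dif_pos hx
    | zero =>
      have e : ext 0 = fun _ => 0 := by funext x; simp [ext]
      have e' : ∀ j : Fin n, pd j (fun _ => (0 : ℝ)) = fun _ => 0 := by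
        intro j; funext x; simp [pd]
      rw [e]
      exact ⟨contDiffOn_const, fun x hx i j => by simp [hessD, e']⟩
    | add f g _ _ hf hg => rw [ext_add]; exact solSet_add hV hf hg
    | smul c f _ hf => rw [ext_smul]; exact solSet_smul hV hf c
  let L : S →ₗ[ℝ] ℝ × (Fin n → ℝ) :=
    { toFun := fun f => jet (ext f) p
      map_add' := by
        intro f g
        have e : ext ((f + g : S) : V → ℝ) = fun x => ext f x + ext g x := ext_add _ _
        rw [e]
        refine Prod.ext rfl (funext fun k => ?_)
        exact pd_add (diffAt hV (hsol f).1 hp) (diffAt hV (hsol g).1 hp) k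
      map_smul' := by
        intro c f
        have e : ext ((c • f : S) : V → ℝ) = fun x => c * ext f x := ext_smul _ _
        rw [e]
        refine Prod.ext rfl (funext fun k => ?_)
        exact pd_const_mul (diffAt hV (hsol f).1 hp) c k }
  have hinj : Function.Injective L := by
    rw [injective_iff_map_eq_zero]
    intro f hf
    have := sol_eq_zero hV hc hΓ (hsol f) hp hf
    ext x
    simpa [ext] using this x x.2
  have hrank : Module.finrank ℝ S = n + 1 :=
    Module.finrank_eq_of_rank_eq (by rw [hdim]; push_cast; rfl)
  have : FiniteDimensional ℝ S := Module.finite_of_finrank_pos (by omega)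
  have hsurj : Function.Surjective L :=
    (LinearMap.injective_iff_surjective_of_finrank_eq_finrank
      (by rw [hrank]; simp [add_comm])).1 hinj
  obtain ⟨f, hf⟩ := hsurj a
  exact ⟨ext f, hsol f, hf⟩

/-! ### Flatness from parallel differentials -/

/-- If `dy` is parallel for the connection `G`, then `dy` is annihilated by the curvature of `G`:
this is the symmetry of the third derivatives of `y`. -/
lemma curvature_apply {n : ℕ} {W : Set (Fin n → ℝ)} (hW : IsOpen W)
    {G : Fin n → Fin n → Fin n → (Fin n → ℝ) → ℝ} {y : (Fin n → ℝ) → ℝ}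
    (hG : ∀ i j k, ContDiffOn ℝ ∞ (G i j k) W) (hy : ContDiffOn ℝ ∞ y W)
    (hGy : ∀ x ∈ W, ∀ i j, pd i (pd j y) x = ∑ k, G i j k x * pd k y x)
    {x : Fin n → ℝ} (hx : x ∈ W) (a b c : Fin n) :
    ∑ d, (pd a (G b c d) x - pd b (G a c d) x
      + ∑ l, (G a l d x * G b c l x - G b l d x * G a c l x)) * pd d y x = 0 := by
  have third : ∀ a b, pd a (pd b (pd c y)) x
      = ∑ d, (pd a (G b c d) x + ∑ l, G a l d x * G b c l x) * pd d y x := by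
    intro a b
    rw [pd_congr hW (fun x hx => hGy x hx b c) a x hx, pd_sum _ fun k _ =>
      (diffAt hW (hG b c k) hx).fun_mul (diffAt hW (contDiffOn_pd_s6 hW hy k) hx)]
    simp only [pd_mul (diffAt hW (hG b c _) hx) (diffAt hW (contDiffOn_pd_s6 hW hy _) hx),
      hGy x hx, add_mul, Finset.sum_add_distrib, Finset.mul_sum, Finset.sum_mul]
    rw [add_comm]
    congr 1
    · exact Finset.sum_congr rfl fun d _ => by ring
    · rw [Finset.sum_comm]
      exact Finset.sum_congr rfl fun d _ => Finset.sum_congr rfl fun l _ => by ring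
  have h := pd_comm hW (contDiffOn_pd_s6 hW hy c) a b hx
  rw [third, third] at h
  rw [← sub_eq_zero, ← Finset.sum_sub_distrib] at h
  rw [← h]
  refine Finset.sum_congr rfl fun d _ => ?_
  rw [Finset.sum_sub_distrib]
  ring

/-- if for some `μ` the solution space of the affine quasi-Einstein equation
has the maximal dimension `n+1` on some connected open neighborhood of `p`, then `D` is
strongly projectively flat on some neighborhood of `p`. -/
theorem statement6 {n : ℕ} (hn : 2 ≤ n) (U : Set (Fin n → ℝ)) (hU : IsOpen U)
    (Γ : Fin n → Fin n → Fin n → (Fin n → ℝ) → ℝ)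
    (hΓ : ∀ i j k, ContDiffOn ℝ ∞ (Γ i j k) U)
    (hΓsym : ∀ i j k, Γ i j k = Γ j i k)
    (p : Fin n → ℝ) (hp : p ∈ U) (μ : ℝ)
    (hdim : ∃ V : Set (Fin n → ℝ), V ⊆ U ∧ IsOpen V ∧ IsConnected V ∧ p ∈ V ∧
      Module.rank ℝ ↥(Submodule.span ℝ (V.restrict '' solSet V Γ μ)) = (n : Cardinal) + 1) :
    ∃ W : Set (Fin n → ℝ), W ⊆ U ∧ IsOpen W ∧ p ∈ W ∧ StronglyProjFlatOn Γ W := by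
  obtain ⟨V, hVU, hV, hVc, hpV, hrank⟩ := hdim
  have hΓV : ∀ i j k, ContDiffOn ℝ ∞ (Γ i j k) V := fun i j k => (hΓ i j k).mono hVU
  have hex := exists_sol_jet hV hVc.isPreconnected hΓV hpV hrank
  obtain ⟨u, hu, hup⟩ := hex (1, 0)
  choose h hh hhp using fun a : Fin n => hex (0, Pi.single a 1)
  have hup0 : u p = 1 := congrArg Prod.fst hup
  -- `W₁` is where the quotients `y a = h a / u` are defined.
  set W₁ : Set (Fin n → ℝ) := V ∩ u ⁻¹' {0}ᶜ with hW₁def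
  have hW₁ : IsOpen W₁ := hu.1.continuousOn.isOpen_inter_preimage hV isOpen_compl_singleton
  have hpW₁ : p ∈ W₁ := ⟨hpV, by simp [hup0]⟩
  have hu₁ : ContDiffOn ℝ ∞ u W₁ := hu.1.mono Set.inter_subset_left
  let y : Fin n → (Fin n → ℝ) → ℝ := fun a x => h a x / u x
  have hy₁ : ∀ a, ContDiffOn ℝ ∞ (y a) W₁ := fun a =>
    ((hh a).1.mono Set.inter_subset_left).div hu₁ fun x hx => hx.2
  have hyu : ∀ a, ∀ x ∈ W₁, h a x = y a x * u x := fun a x hx =>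
    (div_mul_cancel₀ _ hx.2).symm
  let J : (Fin n → ℝ) → Matrix (Fin n) (Fin n) ℝ := fun x => Matrix.of fun a k => pd k (y a) x
  have hJp : J p = 1 := by
    ext a k
    have e := pd_congr hW₁ (hyu a) k p hpW₁
    rw [pd_mul (diffAt hW₁ (hy₁ a) hpW₁) (diffAt hW₁ hu₁ hpW₁)] at e
    have e1 : pd k (h a) p = (Pi.single a (1 : ℝ) : Fin n → ℝ) k :=
      congrFun (congrArg Prod.snd (hhp a)) k
    have e2 : pd k u p = 0 := congrFun (congrArg Prod.snd hup) k
    rw [e1, e2, hup0, mul_zero, zero_add, one_mul] at e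
    change pd k (y a) p = _
    rw [← e, Matrix.one_apply, Pi.single_apply]
    simp only [eq_comm]
  have hJc : ContinuousOn (fun x => (J x).det) W₁ := by
    have : ∀ a k, ContinuousOn (fun x => J x a k) W₁ := fun a k =>
      (contDiffOn_pd_s6 hW₁ (hy₁ a) k).continuousOn
    simp only [Matrix.det_apply]
    exact continuousOn_finsetSum _ fun σ _ =>
      (continuousOn_finsetProd _ fun i _ => this _ _).const_smul _
  set W : Set (Fin n → ℝ) := W₁ ∩ (fun x => (J x).det) ⁻¹' {0}ᶜ with hWdef
  have hW : IsOpen W := hJc.isOpen_inter_preimage hW₁ isOpen_compl_singleton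
  have hWW₁ : W ⊆ W₁ := Set.inter_subset_left
  have hWV : W ⊆ V := hWW₁.trans Set.inter_subset_left
  have huW : ContDiffOn ℝ ∞ u W := hu₁.mono hWW₁
  have hu0 : ∀ x ∈ W, u x ≠ 0 := fun x hx => hx.1.2
  -- The closed form is `w = d log u`.
  let w : Fin n → (Fin n → ℝ) → ℝ := fun i x => pd i u x / u x
  have hw : ∀ i, ContDiffOn ℝ ∞ (w i) W := fun i => (contDiffOn_pd_s6 hW huW i).div huW hu0
  have hwu : ∀ i, ∀ x ∈ W, pd i u x = w i x * u x := fun i x hx =>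
    (div_mul_cancel₀ _ (hu0 x hx)).symm
  let G : Fin n → Fin n → Fin n → (Fin n → ℝ) → ℝ := fun i j k x =>
    Γ i j k x - w i x * (if j = k then 1 else 0) - w j x * (if i = k then 1 else 0)
  have hG : ∀ i j k, ContDiffOn ℝ ∞ (G i j k) W := fun i j k =>
    (((hΓV i j k).mono hWV).sub ((hw i).mul contDiffOn_const)).sub
      ((hw j).mul contDiffOn_const)
  have hyG : ∀ a, ∀ x ∈ W, ∀ i j, pd i (pd j (y a)) x = ∑ k, G i j k x * pd k (y a) x := by
    intro a x hx i j
    have yW := (hy₁ a).mono hWW₁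
    have eu := hu.2 x (hWV hx) i j
    have eh := (hh a).2 x (hWV hx) i j
    have hyuW : ∀ x ∈ W, h a x = y a x * u x := fun x hx => hyu a x (hWW₁ hx)
    have hpd : ∀ k, pd k (h a) x = y a x * pd k u x + u x * pd k (y a) x := fun k => by
      rw [pd_congr hW hyuW k x hx, pd_mul (diffAt hW yW hx) (diffAt hW huW hx)]
    unfold hessD at eu eh
    rw [pd_congr hW (pd_congr hW hyuW j) i x hx, pd_mul_pd_mul hW yW huW i j hx,
      hyuW x hx] at eh
    have es : ∑ k, Γ i j k x * pd k (h a) x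
        = y a x * ∑ k, Γ i j k x * pd k u x + u x * ∑ k, Γ i j k x * pd k (y a) x := by
      rw [Finset.mul_sum, Finset.mul_sum, ← Finset.sum_add_distrib]
      exact Finset.sum_congr rfl fun k _ => by rw [hpd k]; ring
    have eG : ∑ k, G i j k x * pd k (y a) x = ∑ k, Γ i j k x * pd k (y a) x
        - w i x * pd j (y a) x - w j x * pd i (y a) x := by
      simp [G, sub_mul, Finset.sum_sub_distrib]
    rw [es] at eh
    rw [eG]
    apply mul_left_cancel₀ (hu0 x hx)
    linear_combination eh - y a x * eu - pd j (y a) x * hwu i x hx - pd i (y a) x * hwu j x hx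
  refine ⟨W, hWV.trans hVU, hW, ⟨hpW₁, by simp [hJp]⟩, w, G, hw, ?_, hG, ?_, ?_, ?_⟩
  · intro x hx i j
    have e : ∀ i j, pd i (pd j u) x = w j x * pd i u x + u x * pd i (w j) x := fun i j => by
      rw [pd_congr hW (hwu j) i x hx, pd_mul (diffAt hW (hw j) hx) (diffAt hW huW hx)]
    have e3 := pd_comm hW huW i j hx
    rw [e, e, hwu i x hx, hwu j x hx] at e3
    apply mul_left_cancel₀ (hu0 x hx)
    linear_combination e3
  · intro i j k
    funext x
    simp only [G, hΓsym i j k]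
    ring
  · intro x hx a b c d
    -- The curvature components with `a b c` fixed form a vector killed by the Jacobian `J x`.
    have := Matrix.eq_zero_of_mulVec_eq_zero (M := J x) hx.2
      (v := fun d => pd a (G b c d) x - pd b (G a c d) x
        + ∑ l, (G a l d x * G b c l x - G b l d x * G a c l x)) (by
        funext e
        rw [Pi.zero_apply,
          ← curvature_apply hW hG ((hy₁ e).mono hWW₁) (hyG e) hx a b c]
        simp only [Matrix.mulVec, dotProduct]
        exact Finset.sum_congr rfl fun d _ => mul_comm (J x e d) _)
    exact congrFun this d
  · intro x _ i j k
    simp only [G]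
    ring
end

section
/- Let κ ∈ ℝ with κ ≠ 0, let S = {(x¹,x²) ∈ ℝ² : x¹ + x² > 0}, and let D_κ be the affine connection on S whose only nonzero Christoffel symbols are Γ₁₁¹ = Γ₂₂² = κ/(x¹+x²). Then: (a) the Ricci tensor of D_κ is symmetric with ρ₁₁ = ρ₂₂ = 0 and ρ₁₂ = ρ₂₁ = κ/(x¹+x²)²; (b) the Ricci tensor is recurrent, namely its covariant derivative (Dρ)_{k;ij} := ∂_k ρ_{ij} − Σ_l (Γ_{ki}^l ρ_{lj} + Γ_{kj}^l ρ_{il}) satisfies (Dρ)_{k;ij} = −((2+κ)/(x¹+x²)) ρ_{ij} for k = 1,2 and all i,j; and (c) (Dρ)_{k;ij} = 0 identically for all k,i,j if and only if κ = −2. -/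
/-!
Write `s = x¹ + x²` and `f = κ / s`. Every tensor involved is a function of `s` alone, and
`∂₁ s = ∂₂ s = 1`, so both partial derivatives of `κ / s ^ m` are `-m κ / s ^ (m + 1)`
(`pd_div_pow`). In the Ricci tensor the diagonal entries cancel identically, and the off-diagonal
ones reduce to `-∂ f = κ / s²` (`ricci_eq`). The component `(Dρ)_{k;12}` is
then `∂_k ρ₁₂ - f ρ₁₂ = -((2 + κ) / s) ρ₁₂`, all others being determined by symmetry or zero.
As `ρ₁₂` vanishes nowhere on `s > 0`, the factor `2 + κ` decides whether `Dρ = 0`.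
-/

open scoped ContDiff

/-- Covariant derivative of the Ricci tensor:
`(Dρ)_{k;ij} = ∂_k ρ_{ij} − Σ_l (Γ_{ki}^l ρ_{lj} + Γ_{kj}^l ρ_{il})`. -/
noncomputable def covRicciD {n : ℕ} (Γ : Fin n → Fin n → Fin n → (Fin n → ℝ) → ℝ)
    (k i j : Fin n) : (Fin n → ℝ) → ℝ :=
  fun x => pd k (ricciD Γ i j) x
    - ∑ l, (Γ k i l x * ricciD Γ l j x + Γ k j l x * ricciD Γ i l x)

/-- Both partial derivatives agree because `∂_i (x¹ + x²) = 1` for `i = 1, 2`. -/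
lemma pd_div_pow (c : ℝ) (m : ℕ) (i : Fin 2) (x : Fin 2 → ℝ) (hx : 0 < x 0 + x 1) :
    pd i (fun y : Fin 2 → ℝ => c / (y 0 + y 1) ^ m) x = -(m * c) / (x 0 + x 1) ^ (m + 1) := by
  have hs : HasFDerivAt (fun y : Fin 2 → ℝ => y 0 + y 1)
      (ContinuousLinearMap.proj (R := ℝ) (φ := fun _ : Fin 2 => ℝ) 0
        + ContinuousLinearMap.proj (R := ℝ) (φ := fun _ : Fin 2 => ℝ) 1) x :=
    (hasFDerivAt_apply 0 x).add (hasFDerivAt_apply 1 x)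
  have hg : HasDerivAt (fun t : ℝ => c / t ^ m) (-(m * c) / (x 0 + x 1) ^ (m + 1))
      (x 0 + x 1) := by
    have h := ((hasDerivAt_zpow (-(m : ℤ)) (x 0 + x 1) (Or.inl hx.ne')).const_mul c)
    have e : (-(m : ℤ) - 1) = -((m + 1 : ℕ) : ℤ) := by push_cast; ring
    rw [e] at h
    simp only [zpow_neg, zpow_natCast] at h
    have e' : -(m * c) / (x 0 + x 1) ^ (m + 1)
        = c * (((-(m : ℤ) : ℤ) : ℝ) * ((x 0 + x 1) ^ (m + 1))⁻¹) := by
      push_cast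
      ring
    rw [e']
    simpa only [div_eq_mul_inv] using h
  have h := (hg.comp_hasFDerivAt x hs).fderiv
  have h' : fderiv ℝ (fun y : Fin 2 → ℝ => c / (y 0 + y 1) ^ m) x = _ := h
  unfold pd
  rw [h']
  fin_cases i <;> simp

lemma pd_zero (i : Fin 2) (x : Fin 2 → ℝ) : pd i (fun _ : Fin 2 → ℝ => (0 : ℝ)) x = 0 := by
  simp [pd]

lemma pd_congr_of_pos {f g : (Fin 2 → ℝ) → ℝ} (i : Fin 2) (x : Fin 2 → ℝ)
    (hx : 0 < x 0 + x 1) (h : ∀ y : Fin 2 → ℝ, 0 < y 0 + y 1 → f y = g y) :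
    pd i f x = pd i g x := by
  have ho : IsOpen {y : Fin 2 → ℝ | 0 < y 0 + y 1} :=
    isOpen_lt continuous_const ((continuous_apply 0).add (continuous_apply 1))
  have he : f =ᶠ[nhds x] g := by
    filter_upwards [ho.mem_nhds hx] with y hy using h y hy
  simp only [pd, he.fderiv_eq]

lemma ricci_eq (κ : ℝ) (Γ : Fin 2 → Fin 2 → Fin 2 → (Fin 2 → ℝ) → ℝ)
    (hΓ : ∀ i j k (x : Fin 2 → ℝ), Γ i j k x =
      if (i = 0 ∧ j = 0 ∧ k = 0) ∨ (i = 1 ∧ j = 1 ∧ k = 1) then κ / (x 0 + x 1) else 0)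
    (i j : Fin 2) (x : Fin 2 → ℝ) (hx : 0 < x 0 + x 1) :
    ricciD Γ i j x = if i = j then 0 else κ / (x 0 + x 1) ^ 2 := by
  have hd (l : Fin 2) : pd l (fun y : Fin 2 → ℝ => κ / (y 0 + y 1)) x
      = -κ / (x 0 + x 1) ^ 2 := by
    simpa using pd_div_pow κ 1 l x hx
  have hΓ' : Γ = fun i j k x =>
      if (i = 0 ∧ j = 0 ∧ k = 0) ∨ (i = 1 ∧ j = 1 ∧ k = 1) then κ / (x 0 + x 1) else 0 := by
    funext i j k x; exact hΓ i j k x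
  subst hΓ'
  fin_cases i <;> fin_cases j <;> simp [ricciD, hd, pd_zero, neg_div]

lemma covRicci_eq (κ : ℝ) (Γ : Fin 2 → Fin 2 → Fin 2 → (Fin 2 → ℝ) → ℝ)
    (hΓ : ∀ i j k (x : Fin 2 → ℝ), Γ i j k x =
      if (i = 0 ∧ j = 0 ∧ k = 0) ∨ (i = 1 ∧ j = 1 ∧ k = 1) then κ / (x 0 + x 1) else 0)
    (k i j : Fin 2) (x : Fin 2 → ℝ) (hx : 0 < x 0 + x 1) :
    covRicciD Γ k i j x = -((2 + κ) / (x 0 + x 1)) * ricciD Γ i j x := by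
  have hp : pd k (ricciD Γ i j) x = if i = j then 0 else -(2 * κ) / (x 0 + x 1) ^ 3 := by
    rw [pd_congr_of_pos k x hx (ricci_eq κ Γ hΓ i j)]
    split_ifs with hij
    · exact pd_zero k x
    · simpa using pd_div_pow κ 2 k x hx
  have hx' := hx.ne'
  simp only [covRicciD, hp, ricci_eq κ Γ hΓ _ _ x hx, hΓ, Fin.sum_univ_two]
  fin_cases k <;> fin_cases i <;> fin_cases j <;> simp <;> field_simp <;> ring

/-- for the connection `D_κ` on `S = {x¹ + x² > 0}` with only nonzero
Christoffel symbols `Γ₁₁¹ = Γ₂₂² = κ/(x¹+x²)`: (a) the Ricci tensor is symmetric with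
`ρ₁₁ = ρ₂₂ = 0`, `ρ₁₂ = ρ₂₁ = κ/(x¹+x²)²`; (b) it is recurrent with
`(Dρ)_{k;ij} = −((2+κ)/(x¹+x²)) ρ_{ij}`; (c) `Dρ = 0` on `S` iff `κ = −2`. -/
theorem statement10 (κ : ℝ) (hκ : κ ≠ 0)
    (Γ : Fin 2 → Fin 2 → Fin 2 → (Fin 2 → ℝ) → ℝ)
    (hΓ : ∀ i j k (x : Fin 2 → ℝ), Γ i j k x =
      if (i = 0 ∧ j = 0 ∧ k = 0) ∨ (i = 1 ∧ j = 1 ∧ k = 1) then κ / (x 0 + x 1) else 0) :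
    (∀ x ∈ {y : Fin 2 → ℝ | 0 < y 0 + y 1},
      ricciD Γ 0 0 x = 0 ∧ ricciD Γ 1 1 x = 0 ∧
      ricciD Γ 0 1 x = κ / (x 0 + x 1) ^ 2 ∧ ricciD Γ 1 0 x = κ / (x 0 + x 1) ^ 2) ∧
    (∀ x ∈ {y : Fin 2 → ℝ | 0 < y 0 + y 1}, ∀ k i j,
      covRicciD Γ k i j x = -((2 + κ) / (x 0 + x 1)) * ricciD Γ i j x) ∧
    ((∀ x ∈ {y : Fin 2 → ℝ | 0 < y 0 + y 1}, ∀ k i j, covRicciD Γ k i j x = 0) ↔ κ = -2) := by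
  refine ⟨fun x hx => ?_, fun x hx k i j => covRicci_eq κ Γ hΓ k i j x hx, fun h => ?_, ?_⟩
  · simp [ricci_eq κ Γ hΓ _ _ x hx]
  · -- Any point of `S` with `x¹ + x² > 0` suffices; at `(1, 1)` one has `ρ₁₂ = κ / 4 ≠ 0`.
    have hx : (0 : ℝ) < (fun _ : Fin 2 => (1 : ℝ)) 0 + (fun _ : Fin 2 => (1 : ℝ)) 1 := by norm_num
    have h1 := h (fun _ => 1) hx 0 0 1
    rw [covRicci_eq κ Γ hΓ _ _ _ _ hx, ricci_eq κ Γ hΓ _ _ _ hx] at h1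
    norm_num [hκ] at h1
    linarith
  · rintro rfl x hx k i j
    rw [covRicci_eq _ Γ hΓ _ _ _ _ hx]
    simp
end
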